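/- Let ψ₁, ψ₂ be continuous viscosity solutions of (E) on (0,∞). Let a, b ∈ Ã with a < b and (a,b) ∩ Ã = ∅, and assume ψ₁(a) = ψ₂(a) and ψ₁(b) = ψ₂(b). Then ψ₁ = ψ₂ on [a,b]. -/

import Mathlib

open Set Filter Topology

/-- `ψ` is a viscosity subsolution of (E): `-((n-1)/r)·ψ'(r) - |ψ'(r)| = h(r)`
on an open set `I ⊆ (0,∞)`: for every test function `φ` differentiable on `(0,∞)`
and every `r₀ ∈ I` at which `ψ - φ` attains a local maximum, the subsolution
inequality holds. -/
def ViscSubsolE (n : ℕ) (h : ℝ → ℝ) (I : Set ℝ) (ψ : ℝ → ℝ) : Prop :=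
  ∀ φ : ℝ → ℝ, DifferentiableOn ℝ φ (Set.Ioi 0) →
    ∀ r₀ ∈ I, IsLocalMax (fun r => ψ r - φ r) r₀ →
      -(((n : ℝ) - 1) / r₀) * deriv φ r₀ - |deriv φ r₀| ≤ h r₀

/-- Viscosity supersolution of (E) on an open set `I ⊆ (0,∞)`. -/
def ViscSupersolE (n : ℕ) (h : ℝ → ℝ) (I : Set ℝ) (ψ : ℝ → ℝ) : Prop :=
  ∀ φ : ℝ → ℝ, DifferentiableOn ℝ φ (Set.Ioi 0) →
    ∀ r₀ ∈ I, IsLocalMin (fun r => ψ r - φ r) r₀ →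
      -(((n : ℝ) - 1) / r₀) * deriv φ r₀ - |deriv φ r₀| ≥ h r₀

/-- Viscosity solution of (E): both a subsolution and a supersolution. -/
def ViscSolE (n : ℕ) (h : ℝ → ℝ) (I : Set ℝ) (ψ : ℝ → ℝ) : Prop :=
  ViscSubsolE n h I ψ ∧ ViscSupersolE n h I ψ

/-!
Write `D⁺` and `D⁻` for the one-dimensional super- and subdifferential. Where `h < 0` and
`0 ≤ (n - 1) / r < 1`, the Hamiltonian `p ↦ -((n - 1) / r) p - |p|` is concave with superlevel set
`{p | h r ≤ -((n - 1) / r) p - |p|} = [α r, β r]`, `α r < 0 < β r`. Hence a supersolution `u` has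
`D⁻u ⊆ [α, β]`, while a subsolution `v` has `D⁺v ∩ (α, β) = ∅`. In particular `0 ∉ D⁺v`, so `v` has
no interior local maximum: it decreases up to a minimum point `m` and increases afterwards. To the
left of `m` this forces `D⁺v ≤ α ≤ D⁻u`, so `v - u` decreases there; to the right,
`D⁺v ≥ β ≥ D⁻u`, so `v - u` increases. Thus `v - u` is at most its larger endpoint value.
-/

/-- The superdifferential `D⁺f(x)` of viscosity theory: the slopes at `x` of the differentiable
functions touching `f` from above at `x`, up to an additive constant. Test functions are required to
be differentiable on all of `ℝ`, so that they are admissible in `ViscSubsolE`. -/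
def superdifferential (f : ℝ → ℝ) (x : ℝ) : Set ℝ :=
  {p | ∃ φ : ℝ → ℝ, Differentiable ℝ φ ∧ HasDerivAt φ p x ∧ IsLocalMax (fun y => f y - φ y) x}

/-- The subdifferential `D⁻f(x)` of viscosity theory: the slopes at `x` of the differentiable
functions touching `f` from below at `x`, up to an additive constant. Test functions are
differentiable on all of `ℝ`, as in `superdifferential`. -/
def subdifferential (f : ℝ → ℝ) (x : ℝ) : Set ℝ :=
  {p | ∃ φ : ℝ → ℝ, Differentiable ℝ φ ∧ HasDerivAt φ p x ∧ IsLocalMin (fun y => f y - φ y) x}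

section Differentials

variable {f u v α β q : ℝ → ℝ} {a b c p x : ℝ}

lemma zero_mem_superdifferential (hf : IsLocalMax f x) : 0 ∈ superdifferential f x :=
  ⟨fun _ => 0, differentiable_const 0, hasDerivAt_const x 0, by simpa only [sub_zero] using hf⟩

lemma add_mem_superdifferential (hp : p ∈ superdifferential (fun y => f y - c * y) x) :
    p + c ∈ superdifferential f x := by
  obtain ⟨φ, hφ, hφp, hmax⟩ := hp
  refine ⟨fun y => φ y + c * y, hφ.add (differentiable_id.const_mul c), ?_, ?_⟩
  · simpa using hφp.fun_add ((hasDerivAt_id x).const_mul c)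
  · simpa only [sub_sub, add_comm] using hmax

lemma neg_mem_superdifferential_neg_iff :
    -p ∈ superdifferential (fun y => -f y) x ↔ p ∈ subdifferential f x := by
  constructor <;> rintro ⟨φ, hφ, hφp, hext⟩ <;> refine ⟨fun y => -φ y, hφ.neg, ?_, ?_⟩
  · simpa only [neg_neg] using hφp.fun_neg
  · simpa only [neg_sub, sub_neg_eq_add, add_comm] using hext.neg
  · exact hφp.fun_neg
  · simpa only [neg_sub, neg_sub_neg] using hext.neg

lemma neg_mem_superdifferential_of_comp_neg (hp : p ∈ superdifferential (fun y => f (-y)) x) :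
    -p ∈ superdifferential f (-x) := by
  obtain ⟨φ, hφ, hφp, hmax⟩ := hp
  refine ⟨fun y => φ (-y), hφ.comp differentiable_neg, ?_, ?_⟩
  · rw [← neg_neg x] at hφp
    exact (hφp.comp (-x) (hasDerivAt_neg (-x))).congr_deriv (mul_neg_one p)
  · have hneg : Tendsto (fun y : ℝ => -y) (𝓝 (-x)) (𝓝 x) := by
      simpa only [neg_neg] using continuous_neg.tendsto (-x)
    filter_upwards [hneg.eventually hmax] with y hy
    simpa only [neg_neg] using hy

lemma neg_mem_subdifferential_of_comp_neg (hp : p ∈ subdifferential (fun y => f (-y)) x) :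
    -p ∈ subdifferential f (-x) :=
  neg_mem_superdifferential_neg_iff.1 <|
    neg_mem_superdifferential_of_comp_neg (f := fun y => -f y) <|
      neg_mem_superdifferential_neg_iff.2 hp

lemma le_of_mem_superdifferential (hf : ∀ᶠ y in 𝓝[<] x, f x - f y ≤ c * (x - y))
    (hp : p ∈ superdifferential f x) : p ≤ c := by
  obtain ⟨φ, -, hφp, hmax⟩ := hp
  have hslope : Tendsto (slope φ x) (𝓝[<] x) (𝓝 p) :=
    (hasDerivAt_iff_tendsto_slope.1 hφp).mono_left (nhdsWithin_mono x fun y hy => ne_of_lt hy)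
  refine le_of_tendsto hslope ?_
  filter_upwards [hf, hmax.filter_mono nhdsWithin_le_nhds, self_mem_nhdsWithin] with y hfy hφy hyx
  rw [slope_comm, slope_def_field, div_le_iff₀ (sub_pos.2 hyx)]
  linarith

lemma exists_pos_mem_superdifferential (hf : ContinuousOn f (Icc a b)) (hx : x ∈ Ioo a b)
    (hax : f a < f x) : ∃ y ∈ Ioo a b, ∃ p ∈ superdifferential f y, 0 < p := by
  -- Test with `δ e^{l (y - x)}`: it is increasing, `δ` is small enough to keep the maximum off `a`,
  -- and `l` is large enough to keep it off `b`.
  set δ := f x - f a with hδ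
  have hδ_pos : 0 < δ := sub_pos.2 hax
  obtain ⟨l, hl_exp, hl⟩ : ∃ l : ℝ, (f b - f x + δ) / δ < Real.exp (l * (b - x)) ∧ 0 < l :=
    (((Real.tendsto_exp_atTop.comp
      (tendsto_id.atTop_mul_const (sub_pos.2 hx.2))).eventually_gt_atTop _).and
      (eventually_gt_atTop 0)).exists
  set φ : ℝ → ℝ := fun y => δ * Real.exp (l * (y - x)) with hφ
  have hφ_deriv (y : ℝ) : HasDerivAt φ (δ * (Real.exp (l * (y - x)) * l)) y := by
    simpa using ((((hasDerivAt_id y).sub_const x).const_mul l).exp).const_mul δ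
  have hφ_diff : Differentiable ℝ φ := fun y => (hφ_deriv y).differentiableAt
  have hφa : 0 < φ a := by positivity
  have hφx : φ x = δ := by simp [hφ]
  have hφb : f b - f x + δ < φ b := (div_lt_iff₀' hδ_pos).1 hl_exp
  obtain ⟨y, hy, hmax⟩ := isCompact_Icc.exists_isLocalMax_mem_open (f := fun y => f y - φ y)
    Ioo_subset_Icc_self (hf.sub hφ_diff.continuous.continuousOn) (Ioo_subset_Icc_self hx)
    (by
      rw [Icc_sdiff_Ioo_same (hx.1.trans hx.2).le]
      rintro z (rfl | rfl) <;> linarith)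
    isOpen_Ioo
  exact ⟨y, hy, _, ⟨φ, hφ_diff, hφ_deriv y, hmax⟩, by positivity⟩

lemma sub_le_mul_sub_of_superdifferential_le (hab : a ≤ b) (hf : ContinuousOn f (Icc a b))
    (hc : ∀ x ∈ Ioo a b, ∀ p ∈ superdifferential f x, p ≤ c) : f b - f a ≤ c * (b - a) := by
  by_contra! hlt
  have hab' : a < b := hab.lt_of_ne (by rintro rfl; simp at hlt)
  set g : ℝ → ℝ := fun y => f y - c * y with hg_def
  have hg : ContinuousOn g (Icc a b) := hf.sub (by fun_prop)
  have hg_lt : g a < g b := by simp only [hg_def]; linarith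
  obtain ⟨x, hgx, hx⟩ : ∃ x, g a < g x ∧ x ∈ Ioo a b :=
    ((((hg b (right_mem_Icc.2 hab)).mono_of_mem_nhdsWithin
      (Icc_mem_nhdsLT hab')).eventually_const_lt hg_lt).and (Ioo_mem_nhdsLT hab')).exists
  obtain ⟨y, hy, p, hp, hp_pos⟩ := exists_pos_mem_superdifferential hg hx hgx
  linarith [hc y hy _ (add_mem_superdifferential hp)]

lemma mul_sub_le_sub_of_le_subdifferential (hab : a ≤ b) (hf : ContinuousOn f (Icc a b))
    (hc : ∀ x ∈ Ioo a b, ∀ p ∈ subdifferential f x, c ≤ p) : c * (b - a) ≤ f b - f a := by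
  have := sub_le_mul_sub_of_superdifferential_le (c := -c) hab hf.fun_neg fun x hx p hp =>
    le_neg_of_le_neg <| hc x hx (-p) <| neg_mem_superdifferential_neg_iff.1 <| by rwa [neg_neg]
  linarith

lemma nonpos_of_mem_superdifferential_sub (hq : ContinuousOn q (Ioo a b))
    (hv : ContinuousOn v (Icc a b)) (hu : ContinuousOn u (Icc a b))
    (hvq : ∀ x ∈ Ioo a b, ∀ p ∈ superdifferential v x, p ≤ q x)
    (huq : ∀ x ∈ Ioo a b, ∀ p ∈ subdifferential u x, q x ≤ p)
    (hx : x ∈ Ioo a b) (hp : p ∈ superdifferential (fun y => v y - u y) x) : p ≤ 0 := by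
  refine le_of_forall_gt_imp_ge_of_dense fun ε hε => le_of_mem_superdifferential ?_ hp
  have hq_near : ∀ᶠ z in 𝓝[<] x, |q z - q x| < ε / 2 :=
    (Metric.tendsto_nhds.1 (hq.continuousAt (isOpen_Ioo.mem_nhds hx)) _
      (half_pos hε)).filter_mono nhdsWithin_le_nhds
  obtain ⟨l, hlx, hl⟩ := mem_nhdsLT_iff_exists_Ioo_subset.1 hq_near
  filter_upwards [Ioo_mem_nhdsLT hlx, Ioo_mem_nhdsLT hx.1] with y hly hay
  have hIcc : Icc y x ⊆ Icc a b := Icc_subset_Icc hay.1.le hx.2.le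
  have hIoo : Ioo y x ⊆ Ioo a b := Ioo_subset_Ioo hay.1.le hx.2.le
  have hq_mem {z : ℝ} (hz : z ∈ Ioo y x) : q z ∈ Ioo (q x - ε / 2) (q x + ε / 2) := by
    have hqz : |q z - q x| < ε / 2 := hl ⟨hly.1.trans hz.1, hz.2⟩
    constructor <;> linarith [abs_lt.1 hqz]
  have hv_le : v x - v y ≤ (q x + ε / 2) * (x - y) :=
    sub_le_mul_sub_of_superdifferential_le hay.2.le (hv.mono hIcc) fun z hz p hp => by
      linarith [hvq z (hIoo hz) p hp, (hq_mem hz).2]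
  have hu_ge : (q x - ε / 2) * (x - y) ≤ u x - u y :=
    mul_sub_le_sub_of_le_subdifferential hay.2.le (hu.mono hIcc) fun z hz p hp => by
      linarith [huq z (hIoo hz) p hp, (hq_mem hz).1]
  linarith

lemma antitoneOn_sub_of_superdifferential_le_of_le_subdifferential (hq : ContinuousOn q (Ioo a b))
    (hv : ContinuousOn v (Icc a b)) (hu : ContinuousOn u (Icc a b))
    (hvq : ∀ x ∈ Ioo a b, ∀ p ∈ superdifferential v x, p ≤ q x)
    (huq : ∀ x ∈ Ioo a b, ∀ p ∈ subdifferential u x, q x ≤ p) :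
    AntitoneOn (fun x => v x - u x) (Icc a b) := fun s hs t ht hst => by
  have := sub_le_mul_sub_of_superdifferential_le (c := 0) hst
    ((hv.fun_sub hu).mono (Icc_subset_Icc hs.1 ht.2)) fun x hx p hp =>
      nonpos_of_mem_superdifferential_sub hq hv hu hvq huq (Ioo_subset_Ioo hs.1 ht.2 hx) hp
  exact sub_nonpos.1 (this.trans_eq (zero_mul _))

lemma antitoneOn_of_zero_notMem_superdifferential (hf : ContinuousOn f (Icc a b))
    (hmin : IsMinOn f (Icc a b) b) (h_zero : ∀ x ∈ Ioo a b, 0 ∉ superdifferential f x) :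
    AntitoneOn f (Icc a b) := by
  intro s hs t ht hst
  by_contra! hlt
  obtain ⟨x, hx, hmax⟩ := isCompact_Icc.exists_isLocalMax_mem_open Ioo_subset_Icc_self
    (hf.mono (Icc_subset_Icc_left hs.1)) ⟨hst, ht.2⟩
    (by
      rw [Icc_sdiff_Ioo_same hs.2]
      rintro z (rfl | rfl)
      exacts [hlt, (hmin hs).trans_lt hlt])
    isOpen_Ioo
  exact h_zero x (Ioo_subset_Ioo_left hs.1 hx) (zero_mem_superdifferential hmax)

lemma antitoneOn_sub_of_isMinOn_right (hα : ContinuousOn α (Ioo a b))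
    (hα_neg : ∀ x ∈ Ioo a b, α x < 0) (hβ_pos : ∀ x ∈ Ioo a b, 0 < β x)
    (hv : ContinuousOn v (Icc a b)) (hu : ContinuousOn u (Icc a b))
    (hvαβ : ∀ x ∈ Ioo a b, ∀ p ∈ superdifferential v x, p ≤ α x ∨ β x ≤ p)
    (huα : ∀ x ∈ Ioo a b, ∀ p ∈ subdifferential u x, α x ≤ p)
    (hmin : IsMinOn v (Icc a b) b) : AntitoneOn (fun x => v x - u x) (Icc a b) := by
  have hv_anti : AntitoneOn v (Icc a b) :=
    antitoneOn_of_zero_notMem_superdifferential hv hmin fun x hx h_zero =>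
      (hvαβ x hx 0 h_zero).elim (hα_neg x hx).not_ge (hβ_pos x hx).not_ge
  refine antitoneOn_sub_of_superdifferential_le_of_le_subdifferential hα hv hu
    (fun x hx p hp => (hvαβ x hx p hp).resolve_right fun hβp => ?_) huα
  have hp_nonpos : p ≤ 0 := by
    refine le_of_mem_superdifferential ?_ hp
    filter_upwards [Ioo_mem_nhdsLT hx.1] with y hy
    linarith [hv_anti ⟨hy.1.le, (hy.2.trans hx.2).le⟩ (Ioo_subset_Icc_self hx) hy.2.le]
  linarith [hβ_pos x hx]

lemma monotoneOn_sub_of_isMinOn_left (hβ : ContinuousOn β (Ioo a b))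
    (hα_neg : ∀ x ∈ Ioo a b, α x < 0) (hβ_pos : ∀ x ∈ Ioo a b, 0 < β x)
    (hv : ContinuousOn v (Icc a b)) (hu : ContinuousOn u (Icc a b))
    (hvαβ : ∀ x ∈ Ioo a b, ∀ p ∈ superdifferential v x, p ≤ α x ∨ β x ≤ p)
    (huβ : ∀ x ∈ Ioo a b, ∀ p ∈ subdifferential u x, p ≤ β x)
    (hmin : IsMinOn v (Icc a b) a) : MonotoneOn (fun x => v x - u x) (Icc a b) := by
  have hIcc {x : ℝ} (hx : x ∈ Icc (-b) (-a)) : -x ∈ Icc a b := ⟨le_neg.1 hx.2, neg_le.1 hx.1⟩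
  have hIoo {x : ℝ} (hx : x ∈ Ioo (-b) (-a)) : -x ∈ Ioo a b := ⟨lt_neg.1 hx.2, neg_lt.1 hx.1⟩
  have h_anti := antitoneOn_sub_of_isMinOn_right (α := fun x => -β (-x)) (β := fun x => -α (-x))
    (hβ.comp continuous_neg.continuousOn fun _ => hIoo).neg
    (fun x hx => neg_neg_iff_pos.2 (hβ_pos _ (hIoo hx)))
    (fun x hx => neg_pos.2 (hα_neg _ (hIoo hx)))
    (hv.comp continuous_neg.continuousOn fun _ => hIcc)
    (hu.comp continuous_neg.continuousOn fun _ => hIcc)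
    (fun x hx p hp => (hvαβ _ (hIoo hx) _ (neg_mem_superdifferential_of_comp_neg hp)).symm.imp
      le_neg_of_le_neg neg_le_of_neg_le)
    (fun x hx p hp => neg_le_of_neg_le (huβ _ (hIoo hx) _ (neg_mem_subdifferential_of_comp_neg hp)))
    (fun x hx => by simpa using hmin (hIcc hx))
  intro s hs t ht hst
  simpa using h_anti (a := -t) ⟨neg_le_neg ht.2, neg_le_neg ht.1⟩
    ⟨neg_le_neg hs.2, neg_le_neg hs.1⟩ (neg_le_neg hst)

theorem sub_le_max_of_superdifferential_of_subdifferential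
    (hα : ContinuousOn α (Ioo a b)) (hβ : ContinuousOn β (Ioo a b))
    (hα_neg : ∀ x ∈ Ioo a b, α x < 0) (hβ_pos : ∀ x ∈ Ioo a b, 0 < β x)
    (hv : ContinuousOn v (Icc a b)) (hu : ContinuousOn u (Icc a b))
    (hvαβ : ∀ x ∈ Ioo a b, ∀ p ∈ superdifferential v x, p ≤ α x ∨ β x ≤ p)
    (huαβ : ∀ x ∈ Ioo a b, ∀ p ∈ subdifferential u x, α x ≤ p ∧ p ≤ β x)
    (hx : x ∈ Icc a b) : v x - u x ≤ max (v a - u a) (v b - u b) := by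
  obtain ⟨m, hm, hmin⟩ := isCompact_Icc.exists_isMinOn ⟨x, hx⟩ hv
  have hIcc_left : Icc a m ⊆ Icc a b := Icc_subset_Icc_right hm.2
  have hIoo_left : Ioo a m ⊆ Ioo a b := Ioo_subset_Ioo_right hm.2
  have hIcc_right : Icc m b ⊆ Icc a b := Icc_subset_Icc_left hm.1
  have hIoo_right : Ioo m b ⊆ Ioo a b := Ioo_subset_Ioo_left hm.1
  rcases le_total x m with hxm | hmx
  · have h_anti := antitoneOn_sub_of_isMinOn_right (hα.mono hIoo_left)
      (fun y hy => hα_neg y (hIoo_left hy)) (fun y hy => hβ_pos y (hIoo_left hy))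
      (hv.mono hIcc_left) (hu.mono hIcc_left) (fun y hy => hvαβ y (hIoo_left hy))
      (fun y hy p hp => (huαβ y (hIoo_left hy) p hp).1) (hmin.on_subset hIcc_left)
    exact le_max_of_le_left (h_anti (left_mem_Icc.2 hm.1) ⟨hx.1, hxm⟩ hx.1)
  · have h_mono := monotoneOn_sub_of_isMinOn_left (hβ.mono hIoo_right)
      (fun y hy => hα_neg y (hIoo_right hy)) (fun y hy => hβ_pos y (hIoo_right hy))
      (hv.mono hIcc_right) (hu.mono hIcc_right) (fun y hy => hvαβ y (hIoo_right hy))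
      (fun y hy p hp => (huαβ y (hIoo_right hy) p hp).2) (hmin.on_subset hIcc_right)
    exact le_max_of_le_right (h_mono ⟨hmx, hx.2⟩ (right_mem_Icc.2 hm.2) hx.2)

end Differentials

section Hamiltonian

variable {k p r : ℝ}

lemma neg_mul_sub_abs_eq_min : -k * p - |p| = min ((1 - k) * p) (-(1 + k) * p) := by
  rcases abs_cases p with ⟨hp, hp0⟩ | ⟨hp, hp0⟩
  · rw [hp, min_eq_right] <;> linarith
  · rw [hp, min_eq_left] <;> linarith

lemma neg_mul_sub_abs_le_iff (hk : |k| < 1) :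
    -k * p - |p| ≤ r ↔ p ≤ r / (1 - k) ∨ -r / (1 + k) ≤ p := by
  obtain ⟨hk_neg, hk_pos⟩ := abs_lt.1 hk
  rw [neg_mul_sub_abs_eq_min, min_le_iff, le_div_iff₀' (by linarith), div_le_iff₀' (by linarith),
    neg_le, neg_mul]

lemma le_neg_mul_sub_abs_iff (hk : |k| < 1) :
    r ≤ -k * p - |p| ↔ r / (1 - k) ≤ p ∧ p ≤ -r / (1 + k) := by
  obtain ⟨hk_neg, hk_pos⟩ := abs_lt.1 hk
  rw [neg_mul_sub_abs_eq_min, le_min_iff, div_le_iff₀' (by linarith), le_div_iff₀' (by linarith),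
    le_neg, neg_mul]

end Hamiltonian

theorem sub_le_max_of_neg_mul_sub_abs {k h u v : ℝ → ℝ} {a b r : ℝ}
    (hk : ContinuousOn k (Ioo a b)) (hk_lt : ∀ s ∈ Ioo a b, |k s| < 1)
    (hh : ContinuousOn h (Ioo a b)) (hh_neg : ∀ s ∈ Ioo a b, h s < 0)
    (hv : ContinuousOn v (Icc a b)) (hu : ContinuousOn u (Icc a b))
    (hvh : ∀ s ∈ Ioo a b, ∀ p ∈ superdifferential v s, -k s * p - |p| ≤ h s)
    (huh : ∀ s ∈ Ioo a b, ∀ p ∈ subdifferential u s, h s ≤ -k s * p - |p|)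
    (hr : r ∈ Icc a b) : v r - u r ≤ max (v a - u a) (v b - u b) := by
  have hk_left {s : ℝ} (hs : s ∈ Ioo a b) : 0 < 1 - k s := by
    linarith [(abs_lt.1 (hk_lt s hs)).2]
  have hk_right {s : ℝ} (hs : s ∈ Ioo a b) : 0 < 1 + k s := by
    linarith [(abs_lt.1 (hk_lt s hs)).1]
  exact sub_le_max_of_superdifferential_of_subdifferential
    (hh.div (continuousOn_const.sub hk) fun s hs => (hk_left hs).ne')
    (hh.neg.div (continuousOn_const.add hk) fun s hs => (hk_right hs).ne')
    (fun s hs => div_neg_of_neg_of_pos (hh_neg s hs) (hk_left hs))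
    (fun s hs => div_pos (neg_pos.2 (hh_neg s hs)) (hk_right hs)) hv hu
    (fun s hs p hp => (neg_mul_sub_abs_le_iff (hk_lt s hs)).1 (hvh s hs p hp))
    (fun s hs p hp => (le_neg_mul_sub_abs_iff (hk_lt s hs)).1 (huh s hs p hp)) hr

section RadialEquation

variable {n : ℕ} {h ψ u v : ℝ → ℝ} {I J : Set ℝ} {a b p r : ℝ}

lemma ViscSubsolE.mono (hψ : ViscSubsolE n h J ψ) (hIJ : I ⊆ J) : ViscSubsolE n h I ψ :=
  fun φ hφ r hr => hψ φ hφ r (hIJ hr)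

lemma ViscSupersolE.mono (hψ : ViscSupersolE n h J ψ) (hIJ : I ⊆ J) : ViscSupersolE n h I ψ :=
  fun φ hφ r hr => hψ φ hφ r (hIJ hr)

lemma ViscSolE.mono (hψ : ViscSolE n h J ψ) (hIJ : I ⊆ J) : ViscSolE n h I ψ :=
  ⟨hψ.1.mono hIJ, hψ.2.mono hIJ⟩

lemma ViscSubsolE.le_of_mem_superdifferential (hψ : ViscSubsolE n h I ψ) (hr : r ∈ I)
    (hp : p ∈ superdifferential ψ r) : -(((n : ℝ) - 1) / r) * p - |p| ≤ h r := by
  obtain ⟨φ, hφ, hφp, hmax⟩ := hp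
  simpa only [hφp.deriv] using hψ φ hφ.differentiableOn r hr hmax

lemma ViscSupersolE.le_of_mem_subdifferential (hψ : ViscSupersolE n h I ψ) (hr : r ∈ I)
    (hp : p ∈ subdifferential ψ r) : h r ≤ -(((n : ℝ) - 1) / r) * p - |p| := by
  obtain ⟨φ, hφ, hφp, hmin⟩ := hp
  simpa only [hφp.deriv] using hψ φ hφ.differentiableOn r hr hmin

theorem ViscSubsolE.sub_le_max (hv : ViscSubsolE n h (Ioo a b) v)
    (hu : ViscSupersolE n h (Ioo a b) u) (hn : 1 ≤ n) (ha : (n : ℝ) - 1 ≤ a)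
    (hh : ContinuousOn h (Ioo a b)) (hh_neg : ∀ r ∈ Ioo a b, h r < 0)
    (hv_cont : ContinuousOn v (Icc a b)) (hu_cont : ContinuousOn u (Icc a b))
    (hr : r ∈ Icc a b) : v r - u r ≤ max (v a - u a) (v b - u b) := by
  have hn_sub : (0 : ℝ) ≤ (n : ℝ) - 1 := sub_nonneg.2 (by exact_mod_cast hn)
  have hpos {s : ℝ} (hs : s ∈ Ioo a b) : 0 < s := (hn_sub.trans ha).trans_lt hs.1
  refine sub_le_max_of_neg_mul_sub_abs (k := fun s => ((n : ℝ) - 1) / s)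
    (continuousOn_const.div continuousOn_id fun s hs => (hpos hs).ne') (fun s hs => ?_) hh hh_neg
    hv_cont hu_cont (fun s hs p hp => hv.le_of_mem_superdifferential hs hp)
    (fun s hs p hp => hu.le_of_mem_subdifferential hs hp) hr
  rw [abs_of_nonneg (div_nonneg hn_sub (hpos hs).le), div_lt_one (hpos hs)]
  exact ha.trans_lt hs.1

end RadialEquation

lemma lt_of_mem_upperBounds_image_of_inter_eq_empty {X Y : Type*} [PartialOrder Y] {f : X → Y}
    {s I : Set X} {c : Y} {r : X}
    (hc : c ∈ upperBounds (f '' s)) (hI : I ⊆ s) (h_empty : I ∩ {r | r ∈ s ∧ f r = c} = ∅)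
    (hr : r ∈ I) : f r < c :=
  (hc (mem_image_of_mem f (hI hr))).lt_of_ne fun hfr =>
    (h_empty ▸ ⟨hr, hI hr, hfr⟩ : r ∈ (∅ : Set X))

theorem stmt_6_general {n : ℕ} (hn : 1 ≤ n) {h ψ₁ ψ₂ : ℝ → ℝ} {a b : ℝ} (ha : (n : ℝ) - 1 ≤ a)
    (hh : ContinuousOn h (Ioo a b)) (hh_neg : ∀ r ∈ Ioo a b, h r < 0)
    (hψ₁_cont : ContinuousOn ψ₁ (Icc a b)) (hψ₂_cont : ContinuousOn ψ₂ (Icc a b))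
    (hψ₁ : ViscSolE n h (Ioo a b) ψ₁) (hψ₂ : ViscSolE n h (Ioo a b) ψ₂)
    (heqa : ψ₁ a = ψ₂ a) (heqb : ψ₁ b = ψ₂ b) : EqOn ψ₁ ψ₂ (Icc a b) := by
  intro r hr
  have h₁₂ := hψ₁.1.sub_le_max hψ₂.2 hn ha hh hh_neg hψ₁_cont hψ₂_cont hr
  have h₂₁ := hψ₂.1.sub_le_max hψ₁.2 hn ha hh hh_neg hψ₂_cont hψ₁_cont hr
  rw [heqa, heqb, sub_self, sub_self, max_self, sub_nonpos] at h₁₂ h₂₁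
  exact le_antisymm h₁₂ h₂₁

/-- If two continuous viscosity solutions of (E) on `(0,∞)` agree at
two consecutive points `a < b` of the uniqueness set `Ã = {r ≥ n-1 : f̃(r) = c}`
(i.e. `(a,b) ∩ Ã = ∅`), then they agree on all of `[a,b]`. -/
theorem stmt_6 (n : ℕ) (hn : 2 ≤ n) (ftilde : ℝ → ℝ)
    (hfC1 : ContDiffOn ℝ 1 ftilde (Set.Ici 0))
    (hfnonneg : ∀ r ∈ Set.Ici (0 : ℝ), 0 ≤ ftilde r)
    (hfsupp : ∃ R : ℝ, 0 < R ∧ ∀ r ≥ R, ftilde r = 0)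
    (c : ℝ) (hc : IsGreatest (ftilde '' Set.Ici ((n : ℝ) - 1)) c)
    (ψ₁ ψ₂ : ℝ → ℝ)
    (hψ₁cont : ContinuousOn ψ₁ (Set.Ici 0)) (hψ₂cont : ContinuousOn ψ₂ (Set.Ici 0))
    (hψ₁ : ViscSolE n (fun r => ftilde r - c) (Set.Ioi 0) ψ₁)
    (hψ₂ : ViscSolE n (fun r => ftilde r - c) (Set.Ioi 0) ψ₂)
    (a b : ℝ) (hab : a < b)
    (ha : a ∈ {r : ℝ | (n : ℝ) - 1 ≤ r ∧ ftilde r = c})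
    (hb : b ∈ {r : ℝ | (n : ℝ) - 1 ≤ r ∧ ftilde r = c})
    (hgap : Set.Ioo a b ∩ {r : ℝ | (n : ℝ) - 1 ≤ r ∧ ftilde r = c} = ∅)
    (heqa : ψ₁ a = ψ₂ a) (heqb : ψ₁ b = ψ₂ b) :
    ∀ r ∈ Set.Icc a b, ψ₁ r = ψ₂ r := by
  have hIcc : Icc a b ⊆ Ioi 0 := fun r hr =>
    (sub_pos.2 (by exact_mod_cast hn : (1 : ℝ) < n)).trans_le (ha.1.trans hr.1)
  have hIoo : Ioo a b ⊆ Ioi 0 := Ioo_subset_Icc_self.trans hIcc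
  exact stmt_6_general (one_le_two.trans hn) ha.1
    ((hfC1.continuousOn.mono (hIoo.trans Ioi_subset_Ici_self)).sub continuousOn_const)
    (fun r hr => sub_neg.2 <| lt_of_mem_upperBounds_image_of_inter_eq_empty hc.2
      (fun s hs => ha.1.trans hs.1.le) hgap hr)
    (hψ₁cont.mono (hIcc.trans Ioi_subset_Ici_self)) (hψ₂cont.mono (hIcc.trans Ioi_subset_Ici_self))
    (hψ₁.mono hIoo) (hψ₂.mono hIoo) heqa heqb
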